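/- Volume estimate: Let Σ = Graph(u) be an entire graphical smooth self-shrinker in ℝⁿ⁺¹ and let M_R = sup_{|x|≤R} |u(x)|. Then Vol(Σ ∩ B_R) ≤ 2ωₙ Rⁿ (1 + R² + M_R²) for every R > 0, where B_R is the ball of radius R in ℝⁿ⁺¹ and ωₙ is half the volume of the unit n-sphere. -/

import Mathlib

open Real MeasureTheory Metric Filter
open scoped RealInnerProductSpace ENNReal NNReal

noncomputable section

abbrev E (n : ℕ) : Type := EuclideanSpace ℝ (Fin n)

variable {n : ℕ}

/-- `√(1 + |Du|²)`, the area element of the graph of `u`. -/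
def aEl (u : E n → ℝ) (x : E n) : ℝ := Real.sqrt (1 + ‖gradient u x‖ ^ 2)

/-- The vector field `Du/√(1+|Du|²)`. -/
def Vfield (u : E n → ℝ) (x : E n) : E n := (aEl u x)⁻¹ • gradient u x

/-- `div (Du/√(1+|Du|²))`. -/
def divV (u : E n → ℝ) (x : E n) : ℝ :=
  ∑ i, fderiv ℝ (fun y => Vfield u y i) x (EuclideanSpace.single i 1)

/-- The self-shrinker equation for an entire graph. -/
def ShrinkerEq (u : E n → ℝ) : Prop :=
  ∀ x, divV u x = (⟪x, gradient u x⟫ - u x) / (2 * aEl u x)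

/-- The mean curvature of the graph of `u` with respect to the upward unit normal. -/
def meanCurv (u : E n → ℝ) (x : E n) : ℝ := -divV u x

/-- The position vector `X = (x, u x)` of a point of the graph. -/
def Pos (u : E n → ℝ) (x : E n) : E (n + 1) :=
  (WithLp.equiv 2 (Fin (n + 1) → ℝ)).symm (Fin.snoc ((WithLp.equiv 2 (Fin n → ℝ)) x) (u x))

/-- The upward unit normal `n = (-Du, 1)/√(1+|Du|²)` at the point of the graph over `x`. -/
def NmlAt (u : E n → ℝ) (x : E n) : E (n + 1) :=
  (WithLp.equiv 2 (Fin (n + 1) → ℝ)).symm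
    (Fin.snoc (fun i => -(Vfield u x i)) ((aEl u x)⁻¹))

/-- Projection of `ℝ^{n+1}` onto the first `n` coordinates. -/
def projE (p : E (n + 1)) : E n :=
  (WithLp.equiv 2 (Fin n → ℝ)).symm fun i => p i.castSucc

/-- The unit normal of the graph, extended to `ℝ^{n+1}` independently of the last coordinate. -/
def Nml (u : E n → ℝ) (p : E (n + 1)) : E (n + 1) := NmlAt u (projE p)

/-- The inverse induced metric `g^{ij} = δ_{ij} - u_i u_j/(1+|Du|²)` of the graph. -/
def ginv (u : E n → ℝ) (x : E n) (i j : Fin n) : ℝ :=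
  (if i = j then 1 else 0) - gradient u x i * gradient u x j / (aEl u x) ^ 2

/-- The Hessian `u_{ij}` of `u`. -/
def hess (u : E n → ℝ) (x : E n) (i j : Fin n) : ℝ :=
  fderiv ℝ (fun y => gradient u y j) x (EuclideanSpace.single i 1)

/-- `|A|²`, the squared norm of the second fundamental form of the graph of `u`:
`|A|² = g^{ik} g^{jl} h_{ij} h_{kl}` with `h_{ij} = u_{ij}/√(1+|Du|²)`. -/
def A2 (u : E n → ℝ) (x : E n) : ℝ :=
  (∑ i, ∑ j, ∑ k, ∑ l, ginv u x i k * ginv u x j l * hess u x i j * hess u x k l) /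
    (aEl u x) ^ 2

/-- Coordinate components `g^{ij} ∂_j f` of the tangential gradient. -/
def gradCoord (u f : E n → ℝ) (x : E n) (i : Fin n) : ℝ :=
  ∑ j, ginv u x i j * gradient f x j

/-- The tangential gradient `∇_Σ f` (for `f` defined on the base, pulled back to the graph),
as a vector in `ℝ^{n+1}`. -/
def gradSigma (u f : E n → ℝ) (x : E n) : E (n + 1) :=
  (WithLp.equiv 2 (Fin (n + 1) → ℝ)).symm
    (Fin.snoc (fun i => gradCoord u f x i) (∑ i, gradient u x i * gradCoord u f x i))

/-- The Laplace–Beltrami operator of the graph: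
`Δ_Σ f = (1/√g) ∂_i (√g g^{ij} ∂_j f)`. -/
def lapSigma (u f : E n → ℝ) (x : E n) : ℝ :=
  (aEl u x)⁻¹ *
    ∑ i, fderiv ℝ (fun y => aEl u y * gradCoord u f y i) x (EuclideanSpace.single i 1)

/-- The tangential gradient `∇_Σ η` of an ambient function `η : ℝ^{n+1} → ℝ` along the graph:
the ambient gradient minus its normal component. -/
def gradSigmaAmb (u : E n → ℝ) (η : E (n + 1) → ℝ) (x : E n) : E (n + 1) :=
  gradient η (Pos u x) - ⟪gradient η (Pos u x), NmlAt u x⟫ • NmlAt u x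

/-- `Vol(Σ ∩ B_R)`: the area of the part of the graph inside the ball of radius `R`
in `ℝ^{n+1}`, computed by the area formula. -/
def sVol (u : E n → ℝ) (R : ℝ) : ℝ := ∫ x in {x : E n | ‖Pos u x‖ ≤ R}, aEl u x

/-- `M_R = sup_{|x| ≤ R} |u|`. -/
def supBall (u : E n → ℝ) (R : ℝ) : ℝ := ⨆ x : Metric.closedBall (0 : E n) R, |u x.1|

end

/-- `ωₙ`: half of the volume of the unit `n`-sphere in `ℝ^{n+1}`. -/
noncomputable def halfSphereVol (n : ℕ) : ℝ :=
  (μH[(n : ℝ)] (Metric.sphere (0 : E (n + 1)) 1)).toReal / 2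

/-!
Let `χ` be a cutoff decreasing from `1` to `0` between `r ^ 2` and `R ^ 2`, and translate the unit
normal of the graph vertically to a unit field `ν` on `ℝⁿ⁺¹`. The flux of `χ(|y|²) ν` through the
graph is at least `sVol u r`. Instead of Stokes' theorem on the region between the graph and a
spherical cap, the divergence theorem is applied on `ℝⁿ` to `g • Vfield u`, where `g` is the
vertical primitive of `χ(|y|²)` from height `0` to height `u`; since `χ` depends on `|y|²`, no
boundary term remains. The flux becomes

* the contribution of the vertical component of `ν` and a curvature term, together at most
  `Vol(Bⁿ_R) (1 + sup |u H|)`, where `H` is the mean curvature;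
* a term in `χ'`, concentrated on the shell `r < |y| < R`. As `χ'(|y|²)` is even in the vertical
  variable, only half of each vertical line counts, which gives half the area of the `n`-sphere
  of radius `R`, whatever the cutoff.

The shrinker equation says `H = ⟨X, ν⟩ / 2`, whence `|u H| ≤ (R ^ 2 + M_R ^ 2) / 2`.

Since `halfSphereVol` is a Hausdorff measure, the two volumes of balls have to be bounded by it.
The unit ball of `ℝⁿ` is a `1`-Lipschitz projection of either hemisphere. For the ball of `ℝⁿ⁺¹`,
a sector of diameter `d ≤ ε` of the shell `1 - ε < |y| < 1` has volume at most
`ε (1 + ε) d ^ n`, so the volume of the shell is at most `ε (1 + ε)` times the Hausdorff measure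
of the sphere; then `ε → 0`.
-/

section SphereMeasure

open Module
open NormedSpace (norm_normalize norm_smul_normalize)

theorem norm_smul_sub_smul_le {G : Type*} [SeminormedAddCommGroup G] [NormedSpace ℝ G]
    {a b : G} {s t d : ℝ} (hs : s ∈ Set.Icc 0 1) (ht : t ∈ Set.Icc 0 1)
    (ha : ‖a‖ ≤ d) (hb : ‖b‖ ≤ d) (hab : ‖a - b‖ ≤ d) : ‖s • a - t • b‖ ≤ d := by
  wlog hts : t ≤ s generalizing a b s t
  · rw [norm_sub_rev]
    exact this ht hs hb ha (norm_sub_rev a b ▸ hab) (le_of_not_ge hts)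
  calc ‖s • a - t • b‖ = ‖(s - t) • a + t • (a - b)‖ := by congr 1; module
    _ ≤ (s - t) * ‖a‖ + t * ‖a - b‖ := by
      refine (norm_add_le _ _).trans_eq ?_
      rw [norm_smul, norm_smul, Real.norm_of_nonneg (sub_nonneg.2 hts), Real.norm_of_nonneg ht.1]
    _ ≤ (s - t) * d + t * d := by
      have := ht.1
      have := sub_nonneg.2 hts
      gcongr
    _ = s * d := by ring
    _ ≤ d := mul_le_of_le_one_left ((norm_nonneg a).trans ha) hs.2

theorem hausdorffMeasure_image_lt_top {G H : Type*} [NormedAddCommGroup G]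
    [NormedSpace ℝ G] [FiniteDimensional ℝ G] [NormedAddCommGroup H] [NormedSpace ℝ H]
    [MeasurableSpace H] [BorelSpace H] {f : G → H} (hf : ContDiff ℝ 1 f) {s : Set G}
    (hs : IsCompact s) (hconv : Convex ℝ s) : μH[finrank ℝ G] (f '' s) < ∞ := by
  borelize G
  obtain ⟨K, hK⟩ := hf.contDiffOn.exists_lipschitzOnWith one_ne_zero hconv hs
  have hG : (0 : ℝ) ≤ finrank ℝ G := Nat.cast_nonneg _
  refine (hK.hausdorffMeasure_image_le hG).trans_lt (ENNReal.mul_lt_top ?_ hs.measure_lt_top)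
  exact ENNReal.rpow_lt_top_of_nonneg hG ENNReal.coe_ne_top

variable {F : Type*} [NormedAddCommGroup F] [InnerProductSpace ℝ F] {n : ℕ}

theorem exists_orthonormalBasis_apply_zero_eq (hF : finrank ℝ F = n + 1) {p : F} (hp : ‖p‖ = 1) :
    ∃ b : OrthonormalBasis (Fin (n + 1)) ℝ F, b 0 = p := by
  have : FiniteDimensional ℝ F := Module.finite_of_finrank_pos (by omega)
  have hon : Orthonormal ℝ (({0} : Set (Fin (n + 1))).domRestrict fun _ => p) :=
    ⟨fun _ => hp, fun i j hij => (hij (Subsingleton.elim i j)).elim⟩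
  obtain ⟨b, hb⟩ := hon.exists_orthonormalBasis_extension_of_card_eq (by simp [hF])
  exact ⟨b, hb 0 rfl⟩

theorem ediam_image_inner_le_of_norm_mem_Ioc {p : F} (hp : ‖p‖ = 1) {T : Set F} {r d : ℝ}
    (hT : ∀ x ∈ T, ‖x‖ ∈ Set.Ioc r 1) (hr : 0 ≤ r)
    (hd : ∀ x ∈ T, dist p (NormedSpace.normalize x) ≤ d) :
    ediam ((fun x => ⟪p, x⟫) '' T) ≤ ENNReal.ofReal (1 - r + d ^ 2 / 2) := by
  rw [show 1 - r + d ^ 2 / 2 = 1 - (r - d ^ 2 / 2) by ring, ← Real.ediam_Icc]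
  refine ediam_mono (Set.image_subset_iff.2 fun x hx => ?_)
  obtain ⟨hrx, hx1⟩ := hT x hx
  have hxn : ‖NormedSpace.normalize x‖ = 1 := norm_normalize (norm_pos_iff.1 (hr.trans_lt hrx))
  have hcos : 2 * ⟪p, NormedSpace.normalize x⟫ = 2 - dist p (NormedSpace.normalize x) ^ 2 := by
    rw [dist_eq_norm, norm_sub_sq_real, hp, hxn]; ring
  have hdist : dist p (NormedSpace.normalize x) ^ 2 ≤ d ^ 2 := by gcongr; exact hd x hx
  have hpolar : ⟪p, x⟫ = ‖x‖ * ⟪p, NormedSpace.normalize x⟫ := by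
    rw [← real_inner_smul_right, norm_smul_normalize]
  rw [Set.mem_preimage, hpolar]
  constructor <;> nlinarith [sq_nonneg (dist p (NormedSpace.normalize x))]

theorem ediam_image_inner_le_of_orthogonal {e p : F} (he : ‖e‖ = 1) {T : Set F} {d : ℝ}
    (hT : ∀ x ∈ T, ‖x‖ ≤ 1)
    (hd : ∀ x ∈ T, ∀ y ∈ T, dist (NormedSpace.normalize x) (NormedSpace.normalize y) ≤ d)
    (hp : p ∈ T) (hep : ⟪e, p⟫ = 0) : ediam ((fun x => ⟪e, x⟫) '' T) ≤ ENNReal.ofReal d := by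
  have hpolar (x : F) : ⟪e, x⟫ = ‖x‖ * ⟪e, NormedSpace.normalize x⟫ := by
    rw [← real_inner_smul_right, norm_smul_normalize]
  have hsub (y z : F) : ‖⟪e, y⟫ - ⟪e, z⟫‖ ≤ dist y z := by
    rw [← inner_sub_right, dist_eq_norm]
    simpa [he] using norm_inner_le_norm (𝕜 := ℝ) e (y - z)
  have hdir : ⟪e, NormedSpace.normalize p⟫ = 0 := by
    rw [NormedSpace.normalize, real_inner_smul_right, hep, mul_zero]
  have hle : ∀ x ∈ T, ‖⟪e, NormedSpace.normalize x⟫‖ ≤ d := fun x hx => by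
    simpa [hdir] using
      (hsub (NormedSpace.normalize x) (NormedSpace.normalize p)).trans (hd x hx p hp)
  refine ediam_le ?_
  rintro _ ⟨x, hx, rfl⟩ _ ⟨y, hy, rfl⟩
  simp only [hpolar x, hpolar y, edist_dist, dist_eq_norm]
  exact ENNReal.ofReal_le_ofReal <| norm_smul_sub_smul_le
    ⟨norm_nonneg x, hT x hx⟩ ⟨norm_nonneg y, hT y hy⟩ (hle x hx) (hle y hy)
    ((hsub _ _).trans (hd x hx y hy))

theorem sphere_inter_inner_nonpos_subset_image_stereoInvFunAux {v : F} (hv : ‖v‖ = 1) :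
    sphere 0 1 ∩ {x | ⟪v, x⟫ ≤ 0} ⊆
      (fun w : (ℝ ∙ v)ᗮ => stereoInvFunAux v w) '' closedBall 0 2 := by
  rintro x ⟨hx, hvx : ⟪v, x⟫ ≤ 0⟩
  have hxv : x ≠ v := by
    rintro rfl
    rw [real_inner_self_eq_norm_sq, hv] at hvx
    norm_num at hvx
  refine ⟨stereoToFun v x, ?_, congrArg Subtype.val (stereo_left_inv hv (x := ⟨x, hx⟩) hxv)⟩
  have hden : 1 ≤ 1 - ⟪v, x⟫ := by linarith
  rw [mem_closedBall_zero_iff, stereoToFun_apply, norm_smul]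
  calc ‖2 / (1 - ⟪v, x⟫)‖ * ‖(ℝ ∙ v)ᗮ.orthogonalProjectionOnto x‖ ≤ 2 * ‖x‖ := by
        gcongr
        · rw [Real.norm_of_nonneg (by positivity)]
          exact div_le_self zero_le_two hden
        · exact Submodule.norm_orthogonalProjectionOnto_apply_le _ _
    _ = 2 := by rw [mem_sphere_zero_iff_norm.1 hx, mul_one]

variable [FiniteDimensional ℝ F] [MeasurableSpace F] [BorelSpace F]

theorem volume_le_prod_ediam_inner {ι : Type*} [Fintype ι] (b : OrthonormalBasis ι ℝ F)
    (s : Set F) : volume s ≤ ∏ i, ediam ((fun x => ⟪b i, x⟫) '' s) := by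
  let e : F ≃ᵐ (ι → ℝ) := b.measurableEquiv.trans (MeasurableEquiv.toLp 2 (ι → ℝ)).symm
  have he : MeasurePreserving e :=
    (EuclideanSpace.volume_preserving_symm_measurableEquiv_toLp ι).comp
      b.measurePreserving_measurableEquiv
  have hcoord (i : ι) : Function.eval i '' (e '' s) = (fun x => ⟪b i, x⟫) '' s := by
    rw [Set.image_image]
    exact Set.image_congr fun x _ => b.repr_apply_apply x i
  calc volume s = volume (e '' s) := by
        rw [← he.measure_preimage_equiv, e.preimage_image]
    _ ≤ ∏ i, ediam (Function.eval i '' (e '' s)) := Real.volume_pi_le_prod_diam _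
    _ = ∏ i, ediam ((fun x => ⟪b i, x⟫) '' s) := by simp_rw [hcoord]

-- In an orthonormal basis whose first vector is the direction of a point of `T`, the extent of `T`
-- is at most `1 - r + d ^ 2 / 2` along that vector and at most `d` along each of the others.
theorem volume_sector_le (hF : finrank ℝ F = n + 1) {r d : ℝ} (hr : 0 ≤ r) {T : Set F}
    (hT : ∀ x ∈ T, ‖x‖ ∈ Set.Ioc r 1)
    (hd : ∀ x ∈ T, ∀ y ∈ T, dist (NormedSpace.normalize x) (NormedSpace.normalize y) ≤ d) :
    volume T ≤ ENNReal.ofReal ((1 - r + d ^ 2 / 2) * d ^ n) := by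
  rcases T.eq_empty_or_nonempty with rfl | ⟨p, hp⟩
  · simp
  have hd0 : 0 ≤ d := dist_nonneg.trans (hd p hp p hp)
  have hp0 : p ≠ 0 := norm_pos_iff.1 (hr.trans_lt (hT p hp).1)
  obtain ⟨b, hb⟩ := exists_orthonormalBasis_apply_zero_eq hF (norm_normalize hp0)
  have horth (i : Fin n) : ⟪b i.succ, p⟫ = 0 := by
    rw [← norm_smul_normalize p, ← hb, real_inner_smul_right,
      b.orthonormal.2 (Fin.succ_ne_zero i), mul_zero]
  calc volume T ≤ ∏ i, ediam ((fun x => ⟪b i, x⟫) '' T) := volume_le_prod_ediam_inner b T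
    _ ≤ ENNReal.ofReal (1 - r + d ^ 2 / 2) * ∏ _i : Fin n, ENNReal.ofReal d := by
      rw [Fin.prod_univ_succ, hb]
      gcongr with i
      · exact ediam_image_inner_le_of_norm_mem_Ioc (norm_normalize hp0) hT hr (hd p hp)
      · exact ediam_image_inner_le_of_orthogonal (b.norm_eq_one _) (fun x hx => (hT x hx).2) hd
          hp (horth i)
    _ = ENNReal.ofReal ((1 - r + d ^ 2 / 2) * d ^ n) := by
      have := hT p hp
      rw [Finset.prod_const, Finset.card_univ, Fintype.card_fin, ← ENNReal.ofReal_pow hd0,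
        ← ENNReal.ofReal_mul (by nlinarith [sq_nonneg d, this.1, this.2])]

/-- The image under radial projection to the unit sphere of Lebesgue measure on the shell
`r < ‖x‖ < 1`. -/
noncomputable def shellMeasure (r : ℝ) : Measure F :=
  (volume.restrict (ball 0 1 \ closedBall 0 r)).map NormedSpace.normalize

theorem shellMeasure_apply (r : ℝ) {s : Set F} (hs : MeasurableSet s) :
    shellMeasure r s = volume ((ball 0 1 \ closedBall 0 r) ∩ NormedSpace.normalize ⁻¹' s) := by
  have hmeas : Measurable (NormedSpace.normalize : F → F) := by
    unfold NormedSpace.normalize; fun_prop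
  rw [shellMeasure, Measure.map_apply hmeas hs, Measure.restrict_apply (hmeas hs), Set.inter_comm]

theorem shellMeasure_sphere {r : ℝ} (hr : 0 ≤ r) :
    shellMeasure r (sphere (0 : F) 1) = volume (ball (0 : F) 1 \ closedBall 0 r) := by
  rw [shellMeasure_apply r isClosed_sphere.measurableSet, Set.inter_eq_left.2]
  refine fun x hx => mem_sphere_zero_iff_norm.2 (norm_normalize ?_)
  rintro rfl
  exact hx.2 (mem_closedBall_self hr)

theorem shellMeasure_le (hF : finrank ℝ F = n + 1) {r : ℝ} (hr : 0 ≤ r) {s : Set F}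
    (hs : ediam s ≤ ENNReal.ofReal (1 - r)) (hr1 : r ≤ 1) :
    shellMeasure r s ≤ ENNReal.ofReal ((1 - r) * (2 - r)) * ediam s ^ n := by
  have hs_top : ediam s ≠ ∞ := ne_top_of_le_ne_top ENNReal.ofReal_ne_top hs
  have hs_bdd : Bornology.IsBounded (closure s) := (isBounded_iff_ediam_ne_top.2 hs_top).closure
  have hd : diam s ≤ 1 - r := ENNReal.toReal_le_of_le_ofReal (by linarith) hs
  have hd0 : 0 ≤ diam s := diam_nonneg
  calc shellMeasure r s ≤ shellMeasure r (closure s) := measure_mono subset_closure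
    _ ≤ ENNReal.ofReal ((1 - r + diam s ^ 2 / 2) * diam s ^ n) := by
      rw [shellMeasure_apply r isClosed_closure.measurableSet]
      refine volume_sector_le hF hr (fun x hx => ?_) fun x hx y hy => ?_
      · exact ⟨by simpa using hx.1.2, (mem_ball_zero_iff.1 hx.1.1).le⟩
      · exact diam_closure s ▸ dist_le_diam_of_mem hs_bdd hx.2 hy.2
    _ ≤ ENNReal.ofReal ((1 - r) * (2 - r) * diam s ^ n) := by
      gcongr
      nlinarith
    _ = ENNReal.ofReal ((1 - r) * (2 - r)) * ediam s ^ n := by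
      rw [ENNReal.ofReal_mul (by nlinarith), ENNReal.ofReal_pow hd0, diam,
        ENNReal.ofReal_toReal hs_top]

theorem volume_shell_le_hausdorffMeasure_sphere (hF : finrank ℝ F = n + 1) {r : ℝ} (hr : 0 ≤ r)
    (hr1 : r < 1) :
    volume (ball (0 : F) 1 \ closedBall 0 r) ≤
      ENNReal.ofReal ((1 - r) * (2 - r)) * μH[n] (sphere (0 : F) 1) := by
  set c := ENNReal.ofReal ((1 - r) * (2 - r))
  have hc0 : c ≠ 0 := by
    have : 0 < (1 - r) * (2 - r) := by nlinarith
    simpa [c] using this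
  have hc_top : c ≠ ∞ := ENNReal.ofReal_ne_top
  have hle : c⁻¹ • shellMeasure r ≤ (μH[n] : Measure F) := by
    refine Measure.le_hausdorffMeasure _ _ (ENNReal.ofReal (1 - r)) (by simpa using hr1)
      fun s hs => ?_
    rw [Measure.smul_apply, smul_eq_mul, ENNReal.inv_mul_le_iff hc0 hc_top, ENNReal.rpow_natCast]
    exact shellMeasure_le hF hr hs hr1.le
  have hsphere := hle (sphere 0 1)
  rwa [Measure.smul_apply, smul_eq_mul, ENNReal.inv_mul_le_iff hc0 hc_top,
    shellMeasure_sphere hr] at hsphere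

theorem hausdorffMeasure_sphere_lt_top (hF : finrank ℝ F = n + 1) :
    μH[n] (sphere (0 : F) 1) < ∞ := by
  have : Fact (finrank ℝ F = n + 1) := ⟨hF⟩
  have : Nontrivial F := Module.nontrivial_of_finrank_pos (R := ℝ) (by omega)
  obtain ⟨v, hv⟩ := exists_norm_eq F zero_le_one
  have hcap {w : F} (hw : ‖w‖ = 1) : μH[n] (sphere 0 1 ∩ {x | ⟪w, x⟫ ≤ 0}) < ∞ := by
    have hw0 : w ≠ 0 := norm_ne_zero_iff.1 (hw ▸ one_ne_zero)
    refine (measure_mono (sphere_inter_inner_nonpos_subset_image_stereoInvFunAux hw)).trans_lt ?_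
    rw [← Submodule.finrank_orthogonal_span_singleton (𝕜 := ℝ) (n := n) hw0]
    exact hausdorffMeasure_image_lt_top
      (contDiff_stereoInvFunAux.comp (ℝ ∙ w)ᗮ.subtypeL.contDiff) (isCompact_closedBall 0 2)
      (convex_closedBall 0 2)
  have hcover : sphere (0 : F) 1 ⊆
      (sphere 0 1 ∩ {x | ⟪v, x⟫ ≤ 0}) ∪ (sphere 0 1 ∩ {x | ⟪-v, x⟫ ≤ 0}) := fun x hx => by
    simpa [mem_sphere_zero_iff_norm.1 hx] using le_total ⟪v, x⟫ 0
  exact (measure_mono hcover).trans_lt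
    (measure_union_lt_top (hcap hv) (hcap (by rwa [norm_neg])))

theorem volume_shell (hF : finrank ℝ F = n + 1) {r : ℝ} (hr : 0 ≤ r) (hr1 : r < 1) :
    volume (ball (0 : F) 1 \ closedBall 0 r) =
      ENNReal.ofReal ((1 - r ^ (n + 1)) * volume.real (ball (0 : F) 1)) := by
  have : Nontrivial F := Module.nontrivial_of_finrank_pos (R := ℝ) (by omega)
  rw [measure_sdiff (closedBall_subset_ball hr1) measurableSet_closedBall.nullMeasurableSet
    measure_closedBall_lt_top.ne, Measure.addHaar_closedBall _ _ hr, hF, sub_mul, one_mul,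
    ENNReal.ofReal_sub _ (by positivity), ENNReal.ofReal_mul (by positivity),
    ofReal_measureReal measure_ball_lt_top.ne]

theorem succ_mul_volume_ball_le_hausdorffMeasure_sphere (hF : finrank ℝ F = n + 1) :
    (n + 1) * volume.real (ball (0 : F) 1) ≤ (μH[n] (sphere (0 : F) 1)).toReal := by
  set β := volume.real (ball (0 : F) 1)
  set S := (μH[n] (sphere (0 : F) 1)).toReal with hS
  have hshell : ∀ r ∈ Set.Ico (0 : ℝ) 1,
      (∑ k ∈ Finset.range (n + 1), r ^ k) * β ≤ (2 - r) * S := by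
    rintro r ⟨hr, hr1⟩
    have hle := volume_shell_le_hausdorffMeasure_sphere hF hr hr1
    rw [volume_shell hF hr hr1, ← ENNReal.ofReal_toReal (hausdorffMeasure_sphere_lt_top hF).ne,
      ← hS, ← ENNReal.ofReal_mul (by nlinarith), ENNReal.ofReal_le_ofReal_iff
        (mul_nonneg (by nlinarith) ENNReal.toReal_nonneg), ← geom_sum_mul_neg] at hle
    refine le_of_mul_le_mul_left ?_ (sub_pos.2 hr1)
    linarith
  have hlimit : (∑ k ∈ Finset.range (n + 1), (1 : ℝ) ^ k) * β ≤ (2 - 1) * S := by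
    refine le_of_tendsto_of_tendsto (b := nhdsWithin 1 (Set.Iio 1))
      ((Continuous.tendsto (by fun_prop) 1).mono_left nhdsWithin_le_nhds)
      ((Continuous.tendsto (by fun_prop) 1).mono_left nhdsWithin_le_nhds)
      (f := fun r => (∑ k ∈ Finset.range (n + 1), r ^ k) * β) (g := fun r => (2 - r) * S) ?_
    filter_upwards [Ico_mem_nhdsLT zero_lt_one] with r hr using hshell r hr
  norm_num at hlimit
  exact hlimit

end SphereMeasure

section Graph

variable {n : ℕ} (u : E n → ℝ) (x : E n)

theorem norm_Pos_sq : ‖Pos u x‖ ^ 2 = ‖x‖ ^ 2 + u x ^ 2 := by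
  simp [EuclideanSpace.norm_sq_eq, Fin.sum_univ_castSucc, Pos]

theorem Pos_last : Pos u x (Fin.last n) = u x := by
  simp [Pos]

theorem projE_Pos : projE (Pos u x) = x := by
  ext i; simp [projE, Pos]

theorem lipschitzWith_projE : LipschitzWith 1 (projE (n := n)) := by
  refine LipschitzWith.of_dist_le_mul fun p q => ?_
  rw [NNReal.coe_one, one_mul, EuclideanSpace.dist_eq, EuclideanSpace.dist_eq,
    Fin.sum_univ_castSucc]
  exact Real.sqrt_le_sqrt (le_add_of_nonneg_right (sq_nonneg _))

theorem volume_le_hausdorffMeasure (s : Set (E n)) : volume s ≤ μH[n] s := by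
  have hpi : (μH[n] : Measure (Fin n → ℝ)) = volume := by
    simpa using hausdorffMeasure_pi_real (ι := Fin n)
  calc volume s = volume (WithLp.ofLp '' s) := by
        rw [← (EuclideanSpace.volume_preserving_symm_measurableEquiv_toLp
          (Fin n)).measure_preimage_equiv]
        exact congrArg volume ((MeasurableEquiv.toLp 2 (Fin n → ℝ)).symm.preimage_image s).symm
    _ ≤ μH[n] s := by
      simpa [hpi] using
        (PiLp.lipschitzWith_ofLp 2 fun _ : Fin n => ℝ).hausdorffMeasure_image_le n.cast_nonneg s

theorem volume_le_hausdorffMeasure_image_Pos (s : Set (E n)) :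
    volume s ≤ μH[n] (Pos u '' s) :=
  calc volume s = volume (projE '' (Pos u '' s)) := by simp [Set.image_image, projE_Pos]
    _ ≤ μH[n] (projE '' (Pos u '' s)) := volume_le_hausdorffMeasure _
    _ ≤ μH[n] (Pos u '' s) := by
      simpa using lipschitzWith_projE.hausdorffMeasure_image_le n.cast_nonneg (Pos u '' s)

end Graph

section HalfSphereVol

variable (n : ℕ)

theorem two_mul_volume_ball_le_hausdorffMeasure_sphere :
    2 * volume (ball (0 : E n) 1) ≤ μH[n] (sphere (0 : E (n + 1)) 1) := by
  let w (y : E n) : ℝ := √(1 - ‖y‖ ^ 2)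
  have hpos : ∀ y ∈ ball (0 : E n) 1, 0 < 1 - ‖y‖ ^ 2 := fun y hy => by
    have := mem_ball_zero_iff.1 hy
    nlinarith [norm_nonneg y]
  have hw : ∀ y ∈ ball (0 : E n) 1, 0 < w y := fun y hy => Real.sqrt_pos.2 (hpos y hy)
  have hmem {f : E n → ℝ} (hf : ∀ y, f y ^ 2 = w y ^ 2) :
      ∀ y ∈ ball (0 : E n) 1, Pos f y ∈ sphere (0 : E (n + 1)) 1 := fun y hy => by
    rw [mem_sphere_zero_iff_norm, ← sq_eq_sq₀ (norm_nonneg _) zero_le_one, norm_Pos_sq, hf,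
      Real.sq_sqrt (hpos y hy).le]
    ring
  let upper := {p : E (n + 1) | 0 < p (Fin.last n)}
  have hupper : MeasurableSet upper := (isOpen_lt continuous_const (by fun_prop)).measurableSet
  have hsub₁ : Pos w '' ball 0 1 ⊆ sphere 0 1 ∩ upper := Set.image_subset_iff.2 fun y hy =>
    ⟨hmem (fun _ => rfl) y hy, by simpa [upper, Pos_last] using hw y hy⟩
  have hsub₂ : Pos (-w) '' ball 0 1 ⊆ sphere 0 1 \ upper := Set.image_subset_iff.2 fun y hy =>
    ⟨hmem (fun _ => neg_sq _) y hy, by simpa [upper, Pos_last] using (hw y hy).le⟩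
  calc 2 * volume (ball (0 : E n) 1) = volume (ball (0 : E n) 1) + volume (ball (0 : E n) 1) :=
        two_mul _
    _ ≤ μH[n] (sphere 0 1 ∩ upper) + μH[n] (sphere 0 1 \ upper) := by
      gcongr
      · exact (volume_le_hausdorffMeasure_image_Pos w _).trans (measure_mono hsub₁)
      · exact (volume_le_hausdorffMeasure_image_Pos (-w) _).trans (measure_mono hsub₂)
    _ = μH[n] (sphere 0 1) := measure_inter_add_sdiff _ hupper

theorem volume_ball_le_halfSphereVol : volume.real (ball (0 : E n) 1) ≤ halfSphereVol n := by
  have hfin := hausdorffMeasure_sphere_lt_top (F := E (n + 1)) finrank_euclideanSpace_fin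
  have := ENNReal.toReal_mono hfin.ne (two_mul_volume_ball_le_hausdorffMeasure_sphere n)
  rw [ENNReal.toReal_mul, ENNReal.toReal_ofNat] at this
  rw [halfSphereVol, le_div_iff₀' two_pos]
  exact this

theorem halfSphereVol_nonneg : 0 ≤ halfSphereVol n :=
  measureReal_nonneg.trans (volume_ball_le_halfSphereVol n)

theorem succ_mul_volume_ball_le_halfSphereVol :
    (n + 1) * volume.real (ball (0 : E (n + 1)) 1) ≤ 2 * halfSphereVol n := by
  rw [halfSphereVol, mul_div_cancel₀ _ two_ne_zero]
  exact succ_mul_volume_ball_le_hausdorffMeasure_sphere finrank_euclideanSpace_fin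

end HalfSphereVol


section Leibniz

variable {H G : Type*} [NormedAddCommGroup H] [NormedSpace ℝ H] [NormedAddCommGroup G]
  [NormedSpace ℝ G] {f : H → ℝ → G} {f' : H → ℝ → H →L[ℝ] G}

theorem hasFDerivAt_intervalIntegral_of_continuous (hf : ∀ a s, HasFDerivAt (f · s) (f' a s) a)
    (hfc : Continuous f.uncurry) (hfc' : Continuous f'.uncurry) (a : H) (b c : ℝ) :
    HasFDerivAt (fun a => ∫ s in b..c, f a s) (∫ s in b..c, f' a s) a := by
  have hcont (a : H) : Continuous (f a) := hfc.uncurry_left a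
  have hcont' (a : H) : Continuous (f' a) := hfc'.uncurry_left a
  obtain ⟨C, hC⟩ := isCompact_uIcc.exists_bound_of_continuousOn (hcont' a).continuousOn
  have hbound : ∀ᶠ a' in nhds a, ∀ s ∈ Set.uIcc b c, ‖f' a' s‖ < C + 1 :=
    isCompact_uIcc.eventually_forall_of_forall_eventually fun s hs =>
      hfc'.norm.tendsto (a, s) |>.eventually_lt_const ((hC s hs).trans_lt (lt_add_one C))
  exact intervalIntegral.hasFDerivAt_integral_of_dominated_of_fderiv_le hbound
    (Eventually.of_forall fun a => (hcont a).aestronglyMeasurable)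
    ((hcont a).intervalIntegrable _ _) (hcont' a).aestronglyMeasurable
    (Eventually.of_forall fun s hs a' ha' => (ha' s (Set.uIoc_subset_uIcc hs)).le)
    intervalIntegrable_const (Eventually.of_forall fun s _ a' _ => hf a' s)

variable [CompleteSpace G]

theorem hasFDerivAt_primitive (hf : ∀ a s, HasFDerivAt (f · s) (f' a s) a)
    (hfc : Continuous f.uncurry) (hfc' : Continuous f'.uncurry) (b : ℝ) (p : H × ℝ) :
    HasFDerivAt (fun p : H × ℝ => ∫ s in b..p.2, f p.1 s)
      ((∫ s in b..p.2, f' p.1 s).coprod (.toSpanSingleton ℝ (f p.1 p.2))) p := by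
  have hcont (a : H) : Continuous (f a) := hfc.uncurry_left a
  refine (hasStrictFDerivAt_uncurry_coprod (𝕜 := ℝ) (u := p) (f := fun a t => ∫ s in b..t, f a s)
    (f₁ := fun a t => ∫ s in b..t, f' a s) (f₂ := fun a t => .toSpanSingleton ℝ (f a t))
    (.of_forall fun v => hasFDerivAt_intervalIntegral_of_continuous hf hfc hfc' v.1 b v.2)
    (.of_forall fun v => ((hcont v.1).integral_hasStrictDerivAt b v.2).hasDerivAt.hasFDerivAt)
    ?_ ?_).hasFDerivAt
  · exact (intervalIntegral.continuous_parametric_intervalIntegral_of_continuous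
      (by fun_prop) continuous_snd).continuousAt
  · exact ((ContinuousLinearMap.toSpanSingletonCLE (𝕜 := ℝ) (E := G)).continuous.comp
      hfc).continuousAt

theorem contDiff_primitive (hf : ∀ a s, HasFDerivAt (f · s) (f' a s) a)
    (hfc : Continuous f.uncurry) (hfc' : Continuous f'.uncurry) (b : ℝ) :
    ContDiff ℝ 1 fun p : H × ℝ => ∫ s in b..p.2, f p.1 s := by
  have hfst : Continuous fun p : H × ℝ => ∫ s in b..p.2, f' p.1 s :=
    intervalIntegral.continuous_parametric_intervalIntegral_of_continuous (by fun_prop)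
      continuous_snd
  have hsnd : Continuous fun p : H × ℝ => ContinuousLinearMap.toSpanSingleton ℝ (f p.1 p.2) :=
    (ContinuousLinearMap.toSpanSingletonCLE (𝕜 := ℝ) (E := G)).continuous.comp hfc
  exact contDiff_one_iff_hasFDerivAt.2 ⟨_,
    (ContinuousLinearMap.coprodEquivL (𝕜 := ℝ) (E := H) (F := ℝ) (G := G) ℝ).continuous.comp
      (hfst.prodMk hsnd), hasFDerivAt_primitive hf hfc hfc' b⟩

end Leibniz

section ColumnIntegral

theorem two_mul_abs_intervalIntegral_le_of_even {g : ℝ → ℝ} (hg : Integrable g)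
    (heven : g.Even) (t : ℝ) : 2 * |∫ s in (0 : ℝ)..t, g s| ≤ ∫ s, |g s| := by
  have hneg : ∫ s in -t..0, g s = ∫ s in (0 : ℝ)..t, g s := by
    simpa [heven _] using (intervalIntegral.integral_comp_neg (a := 0) (b := t) g).symm
  calc 2 * |∫ s in (0 : ℝ)..t, g s| = ‖∫ s in -t..t, g s‖ := by
        rw [← intervalIntegral.integral_add_adjacent_intervals (a := -t) (b := 0)
          hg.intervalIntegrable hg.intervalIntegrable, hneg, ← two_mul, norm_mul,
          Real.norm_ofNat, Real.norm_eq_abs]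
    _ ≤ ∫ s in Set.uIoc (-t) t, |g s| := intervalIntegral.norm_integral_le_integral_norm_uIoc
    _ ≤ ∫ s, |g s| := setIntegral_le_integral hg.abs (ae_of_all _ fun _ => abs_nonneg _)

variable {H : Type*} [NormedAddCommGroup H] {φ : ℝ → ℝ} {u : H → ℝ} {x : H}

/-- The integral of the rotationally symmetric density `y ↦ φ (‖y‖ ^ 2)` on `H × ℝ` along the
vertical segment from `(x, 0)` to the point `(x, u x)` of the graph of `u`, counted negatively
where `u x < 0`. -/
noncomputable def columnIntegral (φ : ℝ → ℝ) (u : H → ℝ) (x : H) : ℝ :=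
  ∫ s in (0 : ℝ)..u x, φ (‖x‖ ^ 2 + s ^ 2)

theorem comp_norm_sq_add_sq_eq_zero {R : ℝ} (hφ : ∀ s, R ^ 2 ≤ s → φ s = 0) (hR : 0 ≤ R)
    (hx : R ≤ ‖x‖) (t : ℝ) : φ (‖x‖ ^ 2 + t ^ 2) = 0 :=
  hφ _ (by nlinarith [sq_nonneg t])

theorem columnIntegral_eq_zero {R : ℝ} (hφ : ∀ s, R ^ 2 ≤ s → φ s = 0) (hR : 0 ≤ R)
    (hx : R ≤ ‖x‖) : columnIntegral φ u x = 0 := by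
  simp [columnIntegral, comp_norm_sq_add_sq_eq_zero hφ hR hx]

theorem abs_columnIntegral_le {C : ℝ} (hφ : ∀ s, |φ s| ≤ C) :
    |columnIntegral φ u x| ≤ C * |u x| := by
  simpa [columnIntegral] using intervalIntegral.norm_integral_le_of_norm_le_const
    (a := 0) (b := u x) (f := fun s => φ (‖x‖ ^ 2 + s ^ 2)) fun s _ => hφ _

theorem two_mul_abs_columnIntegral_le (hφ : Integrable fun s => φ (‖x‖ ^ 2 + s ^ 2)) :
    2 * |columnIntegral φ u x| ≤ ∫ s, |φ (‖x‖ ^ 2 + s ^ 2)| :=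
  two_mul_abs_intervalIntegral_le_of_even hφ (fun s => by simp only [neg_sq]) _

variable [InnerProductSpace ℝ H]

theorem hasFDerivAt_comp_norm_sq_add (hφ : ContDiff ℝ 1 φ) (x : H) (s : ℝ) :
    HasFDerivAt (fun x => φ (‖x‖ ^ 2 + s ^ 2))
      (deriv φ (‖x‖ ^ 2 + s ^ 2) • (2 • innerSL ℝ x)) x :=
  (hφ.differentiable one_ne_zero _).hasDerivAt.comp_hasFDerivAt x
    ((hasStrictFDerivAt_norm_sq x).hasFDerivAt.add_const _)

theorem contDiff_columnIntegral (hφ : ContDiff ℝ 1 φ) (hu : ContDiff ℝ 1 u) :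
    ContDiff ℝ 1 (columnIntegral φ u) := by
  have hφc := hφ.continuous
  exact (contDiff_primitive (hasFDerivAt_comp_norm_sq_add hφ) (by fun_prop) (by fun_prop)
    0).comp (contDiff_id.prodMk hu)

theorem fderiv_columnIntegral_apply (hφ : ContDiff ℝ 1 φ) (hu : DifferentiableAt ℝ u x) (v : H) :
    fderiv ℝ (columnIntegral φ u) x v =
      2 * ⟪x, v⟫ * columnIntegral (deriv φ) u x + φ (‖x‖ ^ 2 + u x ^ 2) * fderiv ℝ u x v := by
  have hφc := hφ.continuous
  have hcol := (hasFDerivAt_primitive (hasFDerivAt_comp_norm_sq_add (H := H) hφ) (by fun_prop)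
    (by fun_prop) 0 (x, u x)).comp x ((hasFDerivAt_id x).prodMk hu.hasFDerivAt)
  have hfderiv := hcol.fderiv
  rw [intervalIntegral.integral_smul_const] at hfderiv
  change fderiv ℝ (columnIntegral φ u) x = _ at hfderiv
  simp only [hfderiv, ContinuousLinearMap.comp_apply, ContinuousLinearMap.prod_apply,
    ContinuousLinearMap.id_apply, ContinuousLinearMap.coprod_apply, smul_apply, coe_innerSL_apply,
    nsmul_eq_mul, Nat.cast_ofNat, smul_eq_mul, ContinuousLinearMap.toSpanSingleton_apply,
    columnIntegral]
  ring

end ColumnIntegral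

section Divergence

variable {n : ℕ} {g : E n → ℝ} {V : E n → E n}

/-- The divergence `∑ ∂ᵢ Vᵢ` of a vector field on `ℝⁿ`. -/
noncomputable def divergence (V : E n → E n) (x : E n) : ℝ :=
  ∑ i, fderiv ℝ (fun y => V y i) x (EuclideanSpace.single i 1)

theorem continuous_divergence (hV : ContDiff ℝ 1 V) : Continuous (divergence V) :=
  continuous_finsetSum _ fun i _ =>
    ((contDiff_euclidean.1 hV i).continuous_fderiv one_ne_zero).clm_apply continuous_const

theorem fderiv_apply_eq_sum_single (x v : E n) :
    fderiv ℝ g x v = ∑ i, fderiv ℝ g x (EuclideanSpace.single i 1) * v i := by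
  conv_lhs => rw [← (EuclideanSpace.basisFun (Fin n) ℝ).sum_repr v]
  simp [mul_comm]

theorem integral_fderiv_apply_eq_neg_integral_mul_divergence (hg : ContDiff ℝ 1 g)
    (hs : HasCompactSupport g) (hV : ContDiff ℝ 1 V) :
    ∫ x, fderiv ℝ g x (V x) = -∫ x, g x * divergence V x := by
  have hgc := hg.continuous
  have hVi (i : Fin n) : ContDiff ℝ 1 fun y => V y i := contDiff_euclidean.1 hV i
  have hVc (i : Fin n) := (hVi i).continuous
  have hderiv {f : E n → ℝ} (hf : ContDiff ℝ 1 f) (i : Fin n) :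
      Continuous fun x => fderiv ℝ f x (EuclideanSpace.single i 1) :=
    (hf.continuous_fderiv one_ne_zero).clm_apply continuous_const
  have hint₁ (i : Fin n) :
      Integrable fun x => fderiv ℝ g x (EuclideanSpace.single i 1) * V x i :=
    ((hderiv hg i).mul (hVc i)).integrable_of_hasCompactSupport
      ((hs.fderiv_apply (𝕜 := ℝ) _).mul_right)
  have hint₂ (i : Fin n) :
      Integrable fun x => g x * fderiv ℝ (fun y => V y i) x (EuclideanSpace.single i 1) :=
    (hgc.mul (hderiv (hVi i) i)).integrable_of_hasCompactSupport hs.mul_right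
  simp only [fun x => fderiv_apply_eq_sum_single (g := g) x (V x), divergence, Finset.mul_sum]
  rw [integral_finsetSum _ fun i _ => hint₁ i, integral_finsetSum _ fun i _ => hint₂ i,
    ← Finset.sum_neg_distrib]
  refine Finset.sum_congr rfl fun i _ => ?_
  rw [integral_mul_fderiv_eq_neg_fderiv_mul_of_integrable (hint₁ i) (hint₂ i)
    ((hgc.mul (hVc i)).integrable_of_hasCompactSupport hs.mul_right)
    (fun x _ => hg.differentiable one_ne_zero x) fun x _ => (hVi i).differentiable one_ne_zero x,
    neg_neg]

end Divergence

section Cutoff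

/-- `χ` is a `C¹` antitone cutoff function, equal to `1` on `(-∞, r]` and to `0` on `[R, ∞)`. It is
evaluated at squared norms, so that the ball of radius `R` corresponds to `IsCutoff χ r (R ^ 2)`. -/
structure IsCutoff (χ : ℝ → ℝ) (r R : ℝ) : Prop where
  contDiff : ContDiff ℝ 1 χ
  antitone : Antitone χ
  eq_one : ∀ s ≤ r, χ s = 1
  eq_zero : ∀ s, R ≤ s → χ s = 0

theorem exists_isCutoff {r R : ℝ} (h : r < R) : ∃ χ, IsCutoff χ r R := by
  have hR : 0 < R - r := sub_pos.2 h
  refine ⟨fun s => smoothTransition ((R - s) / (R - r)),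
    smoothTransition.contDiff.comp (by fun_prop),
    fun s t hst => smoothTransition.monotone (by gcongr), fun s hs => ?_, fun s hs => ?_⟩
  · exact smoothTransition.one_of_one_le (by rw [le_div_iff₀ hR]; linarith)
  · exact smoothTransition.zero_of_nonpos (div_nonpos_of_nonpos_of_nonneg (by linarith) hR.le)

theorem hasCompactSupport_of_eq_zero_of_le_norm {H G : Type*} [SeminormedAddCommGroup H]
    [ProperSpace H] [Zero G] {R : ℝ} {f : H → G} (hf : ∀ x, R ≤ ‖x‖ → f x = 0) :
    HasCompactSupport f :=
  .intro' (isCompact_closedBall (0 : H) R) isClosed_closedBall fun x hx =>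
    hf x (not_le.1 fun hle => hx (mem_closedBall_zero_iff.2 hle)).le

theorem norm_toLp_prod_sq {H : Type*} [SeminormedAddCommGroup H] (p : H × ℝ) :
    ‖WithLp.toLp 2 p‖ ^ 2 = ‖p.1‖ ^ 2 + p.2 ^ 2 := by
  simp [WithLp.prod_norm_sq_eq_of_L2]

theorem hasCompactSupport_of_norm_sq_add_sq {H : Type*} [SeminormedAddCommGroup H]
    [ProperSpace H] {R : ℝ} (hR : 0 ≤ R) {f : H × ℝ → ℝ}
    (hf : ∀ p, R ^ 2 ≤ ‖p.1‖ ^ 2 + p.2 ^ 2 → f p = 0) : HasCompactSupport f := by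
  refine hasCompactSupport_of_eq_zero_of_le_norm (R := R) fun p hp => hf p ?_
  rw [Prod.norm_def, le_max_iff, Real.norm_eq_abs] at hp
  rcases hp with hp | hp
  · nlinarith [sq_nonneg p.2]
  · nlinarith [sq_nonneg ‖p.1‖, sq_abs p.2]

namespace IsCutoff

variable {χ : ℝ → ℝ} {r R : ℝ}

theorem nonneg (h : IsCutoff χ r R) (s : ℝ) : 0 ≤ χ s := by
  rw [← h.eq_zero (max s R) (le_max_right _ _)]
  exact h.antitone (le_max_left _ _)

theorem le_one (h : IsCutoff χ r R) (s : ℝ) : χ s ≤ 1 := by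
  rw [← h.eq_one (min s r) (min_le_right _ _)]
  exact h.antitone (min_le_left _ _)

theorem abs_le_one (h : IsCutoff χ r R) (s : ℝ) : |χ s| ≤ 1 :=
  (abs_of_nonneg (h.nonneg s)).trans_le (h.le_one s)

theorem continuous_deriv (h : IsCutoff χ r R) : Continuous (deriv χ) :=
  h.contDiff.continuous_deriv le_rfl

theorem deriv_eq_zero (h : IsCutoff χ r R) {s : ℝ} (hs : R ≤ s) : deriv χ s = 0 := by
  have hmin : IsLocalMin χ s := Eventually.of_forall fun t => by
    rw [h.eq_zero s hs]; exact h.nonneg t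
  exact hmin.deriv_eq_zero

theorem integral_mul_abs_deriv_sq (h : IsCutoff χ r (R ^ 2)) (hr : 0 ≤ r) :
    ∫ y in (0 : ℝ)..R, y * |deriv χ (y ^ 2)| = 1 / 2 := by
  have hderiv (y : ℝ) :
      HasDerivAt (fun y => -χ (y ^ 2) / 2) (y * |deriv χ (y ^ 2)|) y := by
    rw [abs_of_nonpos h.antitone.deriv_nonpos]
    refine ((((h.contDiff.differentiable one_ne_zero _).hasDerivAt.comp y
      (hasDerivAt_pow 2 y)).neg).div_const 2).congr_deriv ?_
    ring
  have hcont := h.continuous_deriv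
  rw [intervalIntegral.integral_eq_sub_of_hasDerivAt (fun y _ => hderiv y)
    (Continuous.intervalIntegrable (by fun_prop) _ _), h.eq_zero _ le_rfl,
    h.eq_one _ (by simpa using hr)]
  ring

theorem setIntegral_Ioi_pow_mul_le (h : IsCutoff χ r (R ^ 2)) (hr : 0 ≤ r) (hR : 0 ≤ R) (n : ℕ) :
    ∫ y in Set.Ioi (0 : ℝ), y ^ n * (y * |deriv χ (y ^ 2)|) ≤ R ^ n / 2 := by
  have hcont := h.continuous_deriv
  calc ∫ y in Set.Ioi (0 : ℝ), y ^ n * (y * |deriv χ (y ^ 2)|)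
      = ∫ y in (0 : ℝ)..R, y ^ n * (y * |deriv χ (y ^ 2)|) := by
        rw [intervalIntegral.integral_of_le hR]
        refine setIntegral_eq_of_subset_of_forall_sdiff_eq_zero measurableSet_Ioi
          Set.Ioc_subset_Ioi_self fun y ⟨hy, hyR⟩ => ?_
        have hRy : R < y := not_le.1 fun hle => hyR ⟨hy, hle⟩
        simp [h.deriv_eq_zero (show R ^ 2 ≤ y ^ 2 by gcongr)]
    _ ≤ ∫ y in (0 : ℝ)..R, R ^ n * (y * |deriv χ (y ^ 2)|) := by
        refine intervalIntegral.integral_mono_on hR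
          (Continuous.intervalIntegrable (by fun_prop) _ _)
          (Continuous.intervalIntegrable (by fun_prop) _ _) fun y ⟨hy, hyR⟩ => ?_
        gcongr
    _ = R ^ n / 2 := by
      rw [intervalIntegral.integral_const_mul, h.integral_mul_abs_deriv_sq hr, mul_one_div]

theorem integral_norm_mul_deriv_norm_sq_le {F : Type*} [NormedAddCommGroup F] [NormedSpace ℝ F]
    [FiniteDimensional ℝ F] [MeasurableSpace F] [BorelSpace F] (μ : Measure F) [μ.IsAddHaarMeasure]
    {n : ℕ} (hF : Module.finrank ℝ F = n + 1) (h : IsCutoff χ r (R ^ 2)) (hr : 0 ≤ r)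
    (hR : 0 ≤ R) :
    ∫ y, ‖y‖ * |deriv χ (‖y‖ ^ 2)| ∂μ ≤ (n + 1) * μ.real (ball 0 1) * (R ^ n / 2) := by
  have : Nontrivial F := Module.nontrivial_of_finrank_pos (R := ℝ) (by omega)
  rw [integral_fun_norm_addHaar μ (fun y => y * |deriv χ (y ^ 2)|), hF, Nat.add_sub_cancel]
  simp only [nsmul_eq_mul, smul_eq_mul, Nat.cast_succ]
  rw [mul_assoc]
  gcongr
  exact h.setIntegral_Ioi_pow_mul_le hr hR n

variable {n : ℕ}

theorem integrable_norm_mul_deriv (h : IsCutoff χ r (R ^ 2)) (hR : 0 ≤ R) :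
    Integrable fun p : E n × ℝ => ‖p.1‖ * |deriv χ (‖p.1‖ ^ 2 + p.2 ^ 2)| := by
  have hcont := h.continuous_deriv
  exact Continuous.integrable_of_hasCompactSupport (by fun_prop)
    (hasCompactSupport_of_norm_sq_add_sq hR fun p hp => by simp [h.deriv_eq_zero hp])

theorem integral_norm_mul_deriv_le (h : IsCutoff χ r (R ^ 2)) (hr : 0 ≤ r) (hR : 0 ≤ R) :
    ∫ p : E n × ℝ, ‖p.1‖ * |deriv χ (‖p.1‖ ^ 2 + p.2 ^ 2)| ≤
      (n + 1) * volume.real (ball (0 : E (n + 1)) 1) * (R ^ n / 2) := by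
  have hcont := h.continuous_deriv
  have hdim : Module.finrank ℝ (WithLp 2 (E n × ℝ)) = n + 1 := by
    rw [(WithLp.linearEquiv 2 ℝ (E n × ℝ)).finrank_eq]; simp
  have hball : volume.real (ball (0 : WithLp 2 (E n × ℝ)) 1) =
      volume.real (ball (0 : E (n + 1)) 1) := by
    have : Nontrivial (WithLp 2 (E n × ℝ)) :=
      Module.nontrivial_of_finrank_pos (R := ℝ) (by omega)
    simp only [Measure.real, InnerProductSpace.volume_ball, hdim, finrank_euclideanSpace_fin]
  calc ∫ p : E n × ℝ, ‖p.1‖ * |deriv χ (‖p.1‖ ^ 2 + p.2 ^ 2)|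
      ≤ ∫ p : E n × ℝ, ‖WithLp.toLp 2 p‖ * |deriv χ (‖WithLp.toLp 2 p‖ ^ 2)| := by
        refine integral_mono (h.integrable_norm_mul_deriv hR)
          (Continuous.integrable_of_hasCompactSupport (by fun_prop)
            (hasCompactSupport_of_norm_sq_add_sq hR fun p hp => ?_)) fun p => ?_
        · rw [norm_toLp_prod_sq, h.deriv_eq_zero hp, abs_zero, mul_zero]
        · simp only [norm_toLp_prod_sq]
          gcongr
          exact WithLp.norm_fst_le _ (WithLp.toLp 2 p)
    _ = ∫ y : WithLp 2 (E n × ℝ), ‖y‖ * |deriv χ (‖y‖ ^ 2)| :=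
        (WithLp.volume_preserving_toLp (E n) ℝ).integral_comp
          (MeasurableEquiv.toLp 2 (E n × ℝ)).measurableEmbedding
          fun y => ‖y‖ * |deriv χ (‖y‖ ^ 2)|
    _ ≤ (n + 1) * volume.real (ball (0 : E (n + 1)) 1) * (R ^ n / 2) :=
        hball ▸ h.integral_norm_mul_deriv_norm_sq_le volume hdim hr hR

theorem abs_integral_inner_mul_columnIntegral_deriv_le (h : IsCutoff χ r (R ^ 2)) (hr : 0 ≤ r)
    (hR : 0 ≤ R) (u : E n → ℝ) {V : E n → E n} (hV : ∀ x, ‖V x‖ ≤ 1) :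
    |∫ x, 2 * ⟪x, V x⟫ * columnIntegral (deriv χ) u x| ≤
      (n + 1) * volume.real (ball (0 : E (n + 1)) 1) * (R ^ n / 2) := by
  have hcont := h.continuous_deriv
  have hint := h.integrable_norm_mul_deriv (n := n) hR
  have hcolumn (x : E n) : Integrable fun s => deriv χ (‖x‖ ^ 2 + s ^ 2) :=
    Continuous.integrable_of_hasCompactSupport (by fun_prop) <|
      hasCompactSupport_of_eq_zero_of_le_norm (R := R) fun s hs => h.deriv_eq_zero <| by
        nlinarith [sq_abs s, sq_nonneg ‖x‖, Real.norm_eq_abs s]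
  have hpointwise (x : E n) : ‖2 * ⟪x, V x⟫ * columnIntegral (deriv χ) u x‖ ≤
      ∫ s, ‖x‖ * |deriv χ (‖x‖ ^ 2 + s ^ 2)| := by
    have hinner : |⟪x, V x⟫| ≤ ‖x‖ :=
      (abs_real_inner_le_norm _ _).trans (mul_le_of_le_one_right (norm_nonneg _) (hV x))
    calc ‖2 * ⟪x, V x⟫ * columnIntegral (deriv χ) u x‖
        = |⟪x, V x⟫| * (2 * |columnIntegral (deriv χ) u x|) := by
          rw [Real.norm_eq_abs, abs_mul, abs_mul, abs_two]; ring
      _ ≤ ‖x‖ * ∫ s, |deriv χ (‖x‖ ^ 2 + s ^ 2)| := by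
          gcongr
          exact two_mul_abs_columnIntegral_le (hcolumn x)
      _ = ∫ s, ‖x‖ * |deriv χ (‖x‖ ^ 2 + s ^ 2)| := (integral_const_mul _ _).symm
  calc |∫ x, 2 * ⟪x, V x⟫ * columnIntegral (deriv χ) u x|
      ≤ ∫ x : E n, ∫ s, ‖x‖ * |deriv χ (‖x‖ ^ 2 + s ^ 2)| :=
        norm_integral_le_of_norm_le hint.integral_prod_left (ae_of_all _ hpointwise)
    _ = ∫ p : E n × ℝ, ‖p.1‖ * |deriv χ (‖p.1‖ ^ 2 + p.2 ^ 2)| := (integral_prod _ hint).symm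
    _ ≤ _ := h.integral_norm_mul_deriv_le hr hR

end IsCutoff

end Cutoff

section GraphGeometry

variable {n : ℕ} {u : E n → ℝ} {x : E n}

theorem contDiff_gradient (hu : ContDiff ℝ 2 u) : ContDiff ℝ 1 (gradient u) :=
  (InnerProductSpace.toDual ℝ (E n)).symm.contDiff.comp (hu.fderiv_right (by norm_num))

theorem aEl_pos (u : E n → ℝ) (x : E n) : 0 < aEl u x :=
  Real.sqrt_pos.2 (by positivity)

theorem aEl_sq (u : E n → ℝ) (x : E n) : aEl u x ^ 2 = 1 + ‖gradient u x‖ ^ 2 :=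
  Real.sq_sqrt (by positivity)

theorem one_le_aEl (u : E n → ℝ) (x : E n) : 1 ≤ aEl u x :=
  Real.one_le_sqrt.2 (by simp)

theorem contDiff_aEl (hu : ContDiff ℝ 2 u) : ContDiff ℝ 1 (aEl u) :=
  (contDiff_const.add ((contDiff_gradient hu).norm_sq ℝ)).sqrt fun x => by positivity

theorem contDiff_Vfield (hu : ContDiff ℝ 2 u) : ContDiff ℝ 1 (Vfield u) :=
  ((contDiff_aEl hu).inv fun x => (aEl_pos u x).ne').smul (contDiff_gradient hu)

theorem continuous_meanCurv (hu : ContDiff ℝ 2 u) : Continuous (meanCurv u) :=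
  (continuous_divergence (contDiff_Vfield hu)).neg

theorem norm_Vfield_sq (u : E n → ℝ) (x : E n) : ‖Vfield u x‖ ^ 2 = 1 - (aEl u x)⁻¹ ^ 2 := by
  have hne := (aEl_pos u x).ne'
  rw [Vfield, norm_smul, mul_pow, norm_inv, inv_pow, Real.norm_eq_abs, sq_abs,
    eq_sub_of_add_eq' (aEl_sq u x).symm]
  field_simp

theorem norm_Vfield_le_one (u : E n → ℝ) (x : E n) : ‖Vfield u x‖ ≤ 1 := by
  rw [← sq_le_one_iff₀ (norm_nonneg _), norm_Vfield_sq]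
  exact sub_le_self _ (sq_nonneg _)

theorem aEl_eq_inv_add_fderiv (u : E n → ℝ) (x : E n) :
    aEl u x = (aEl u x)⁻¹ + fderiv ℝ u x (Vfield u x) := by
  have hne := (aEl_pos u x).ne'
  rw [← inner_gradient_left, Vfield, inner_smul_right, real_inner_self_eq_norm_sq]
  field_simp
  exact aEl_sq u x

theorem norm_NmlAt (u : E n → ℝ) (x : E n) : ‖NmlAt u x‖ = 1 := by
  have hnormal : ‖NmlAt u x‖ ^ 2 = ‖Vfield u x‖ ^ 2 + (aEl u x)⁻¹ ^ 2 := by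
    simp [EuclideanSpace.norm_sq_eq, Fin.sum_univ_castSucc, NmlAt]
  rwa [norm_Vfield_sq, sub_add_cancel, pow_eq_one_iff_of_nonneg (norm_nonneg _) two_ne_zero]
    at hnormal

theorem inner_Pos_NmlAt (u : E n → ℝ) (x : E n) :
    ⟪Pos u x, NmlAt u x⟫ = (u x - ⟪x, gradient u x⟫) / aEl u x := by
  have hinner : ⟪Pos u x, NmlAt u x⟫ = -⟪x, Vfield u x⟫ + u x * (aEl u x)⁻¹ := by
    simp [PiLp.inner_apply, Fin.sum_univ_castSucc, Pos, NmlAt, mul_comm]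
  rw [hinner, Vfield, inner_smul_right]
  ring

namespace ShrinkerEq

theorem meanCurv_eq (hshr : ShrinkerEq u) (x : E n) :
    meanCurv u x = ⟪Pos u x, NmlAt u x⟫ / 2 := by
  rw [meanCurv, hshr x, inner_Pos_NmlAt]
  ring

theorem abs_meanCurv_le (hshr : ShrinkerEq u) (x : E n) : |meanCurv u x| ≤ ‖Pos u x‖ / 2 := by
  have hcs := abs_real_inner_le_norm (Pos u x) (NmlAt u x)
  rw [norm_NmlAt, mul_one] at hcs
  rw [hshr.meanCurv_eq, abs_div, abs_two]
  gcongr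

theorem abs_mul_meanCurv_le (hshr : ShrinkerEq u) (x : E n) :
    |u x * meanCurv u x| ≤ (‖x‖ ^ 2 + u x ^ 2) / 2 := by
  have hle : |u x| ≤ ‖Pos u x‖ :=
    abs_le_of_sq_le_sq (by rw [norm_Pos_sq]; nlinarith [sq_nonneg ‖x‖]) (norm_nonneg _)
  calc |u x * meanCurv u x| = |u x| * |meanCurv u x| := abs_mul _ _
    _ ≤ ‖Pos u x‖ * (‖Pos u x‖ / 2) := by gcongr; exact hshr.abs_meanCurv_le x
    _ = (‖x‖ ^ 2 + u x ^ 2) / 2 := by rw [← norm_Pos_sq]; ring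

end ShrinkerEq

end GraphGeometry

section SupBall

variable {n : ℕ} {u : E n → ℝ} {R : ℝ}

theorem abs_le_supBall (hu : Continuous u) {x : E n} (hx : ‖x‖ ≤ R) : |u x| ≤ supBall u R := by
  have hbdd : BddAbove (Set.range fun x : closedBall (0 : E n) R => |u x.1|) :=
    (isCompact_range (f := fun x : closedBall (0 : E n) R => |u x.1|) (by fun_prop)).bddAbove
  exact le_ciSup hbdd ⟨x, mem_closedBall_zero_iff.2 hx⟩

theorem supBall_le {C : ℝ} (hR : 0 ≤ R) (hu : ∀ x, ‖x‖ ≤ R → |u x| ≤ C) : supBall u R ≤ C :=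
  have : Nonempty (closedBall (0 : E n) R) := ⟨0, mem_closedBall_self hR⟩
  ciSup_le fun x => hu x (mem_closedBall_zero_iff.1 x.2)

theorem supBall_eq_sSup (u : E n → ℝ) (hR : 0 ≤ R) :
    supBall u R = sSup ((fun y : E n => |u (R • y)|) '' closedBall 0 1) := by
  have hball := smul_unitClosedBall (E := E n) R
  rw [Real.norm_of_nonneg hR] at hball
  have hsup := sSup_image' (s := closedBall (0 : E n) R) (f := fun x => |u x|)
  rw [supBall, ← hsup, ← hball, ← Set.image_smul, Set.image_image]

theorem tendsto_supBall (hu : Continuous u) (hR : 0 < R) :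
    Tendsto (supBall u) (nhds R) (nhds (supBall u R)) := by
  have hcont : Continuous fun r : ℝ => sSup ((fun y : E n => |u (r • y)|) '' closedBall 0 1) :=
    (isCompact_closedBall (0 : E n) 1).continuous_sSup (f := fun r y => |u (r • y)|)
      (by unfold Function.HasUncurry.uncurry; fun_prop)
  rw [supBall_eq_sSup u hR.le]
  refine (hcont.tendsto R).congr' ?_
  filter_upwards [lt_mem_nhds hR] with r hr using (supBall_eq_sSup u hr.le).symm

theorem ShrinkerEq.supBall_mul_meanCurv_le (hshr : ShrinkerEq u) (hu : Continuous u)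
    (hR : 0 ≤ R) :
    supBall (fun x => u x * meanCurv u x) R ≤ (R ^ 2 + supBall u R ^ 2) / 2 :=
  supBall_le hR fun x hx => (hshr.abs_mul_meanCurv_le x).trans <| by
    rw [← sq_abs (u x)]
    gcongr
    exact abs_le_supBall hu hx

end SupBall

section Calibration

variable {n : ℕ} {u : E n → ℝ} {r R : ℝ}

theorem integrable_comp_norm_sq_add_mul {φ : ℝ → ℝ} (hφ : Continuous φ)
    (hφ0 : ∀ s, R ^ 2 ≤ s → φ s = 0) (hR : 0 ≤ R) (hu : Continuous u) {f : E n → ℝ}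
    (hf : Continuous f) : Integrable fun x => φ (‖x‖ ^ 2 + u x ^ 2) * f x :=
  Continuous.integrable_of_hasCompactSupport (by fun_prop) <|
    hasCompactSupport_of_eq_zero_of_le_norm fun x hx => by
      rw [comp_norm_sq_add_sq_eq_zero hφ0 hR hx, zero_mul]

theorem integral_mul_aEl_eq {φ : ℝ → ℝ} (hφ : ContDiff ℝ 1 φ) (hφ0 : ∀ s, R ^ 2 ≤ s → φ s = 0)
    (hR : 0 ≤ R) (hu : ContDiff ℝ 2 u) :
    ∫ x, φ (‖x‖ ^ 2 + u x ^ 2) * aEl u x =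
      (∫ x, (φ (‖x‖ ^ 2 + u x ^ 2) * (aEl u x)⁻¹ + columnIntegral φ u x * meanCurv u x)) -
        ∫ x, 2 * ⟪x, Vfield u x⟫ * columnIntegral (deriv φ) u x := by
  have hu1 : ContDiff ℝ 1 u := hu.of_le one_le_two
  have hW := (contDiff_aEl hu).continuous
  have hg : ContDiff ℝ 1 (columnIntegral φ u) := contDiff_columnIntegral hφ hu1
  have hgs : HasCompactSupport (columnIntegral φ u) :=
    hasCompactSupport_of_eq_zero_of_le_norm fun x hx => columnIntegral_eq_zero hφ0 hR hx
  have hint := integrable_comp_norm_sq_add_mul hφ.continuous hφ0 hR hu.continuous hW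
  have hint_inv : Integrable fun x => φ (‖x‖ ^ 2 + u x ^ 2) * (aEl u x)⁻¹ :=
    integrable_comp_norm_sq_add_mul hφ.continuous hφ0 hR hu.continuous
      (hW.inv₀ fun x => (aEl_pos u x).ne')
  have hint_curv : Integrable fun x => columnIntegral φ u x * meanCurv u x :=
    (hg.continuous.mul (continuous_meanCurv hu)).integrable_of_hasCompactSupport hgs.mul_right
  have hint_deriv : Integrable fun x => fderiv ℝ (columnIntegral φ u) x (Vfield u x) :=
    ((hg.continuous_fderiv one_ne_zero).clm_apply
      (contDiff_Vfield hu).continuous).integrable_of_hasCompactSupport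
      ((hgs.fderiv ℝ).mono fun x hx hzero => hx (by simp [hzero]))
  have hint_sum : Integrable fun x => φ (‖x‖ ^ 2 + u x ^ 2) * (aEl u x)⁻¹ +
      fderiv ℝ (columnIntegral φ u) x (Vfield u x) := hint_inv.add hint_deriv
  have hparts : ∫ x, fderiv ℝ (columnIntegral φ u) x (Vfield u x) =
      ∫ x, columnIntegral φ u x * meanCurv u x := by
    rw [integral_fderiv_apply_eq_neg_integral_mul_divergence hg hgs (contDiff_Vfield hu),
      ← integral_neg]
    simp only [meanCurv, mul_neg]
    rfl
  have hpointwise (x : E n) : 2 * ⟪x, Vfield u x⟫ * columnIntegral (deriv φ) u x =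
      φ (‖x‖ ^ 2 + u x ^ 2) * (aEl u x)⁻¹ + fderiv ℝ (columnIntegral φ u) x (Vfield u x) -
        φ (‖x‖ ^ 2 + u x ^ 2) * aEl u x := by
    rw [fderiv_columnIntegral_apply hφ (hu1.differentiable one_ne_zero x)]
    linear_combination φ (‖x‖ ^ 2 + u x ^ 2) * aEl_eq_inv_add_fderiv u x
  simp only [hpointwise]
  rw [integral_sub hint_sum hint, integral_add hint_inv hint_deriv,
    integral_add hint_inv hint_curv, hparts]
  ring

variable {χ : ℝ → ℝ}

theorem sVol_le_integral_mul_aEl (h : IsCutoff χ (r ^ 2) (R ^ 2)) (hr : 0 ≤ r) (hR : 0 ≤ R)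
    (hu : ContDiff ℝ 2 u) : sVol u r ≤ ∫ x, χ (‖x‖ ^ 2 + u x ^ 2) * aEl u x := by
  have huc := hu.continuous
  have hset : {x : E n | ‖Pos u x‖ ≤ r} = {x | ‖x‖ ^ 2 + u x ^ 2 ≤ r ^ 2} := by
    ext x
    rw [Set.mem_ofPred_eq, Set.mem_ofPred_eq, ← norm_Pos_sq, sq_le_sq₀ (norm_nonneg _) hr]
  have hmeas : MeasurableSet {x : E n | ‖x‖ ^ 2 + u x ^ 2 ≤ r ^ 2} :=
    (isClosed_le (by fun_prop) continuous_const).measurableSet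
  rw [sVol, hset, ← integral_indicator hmeas]
  refine integral_mono_of_nonneg
    (ae_of_all _ fun x => Set.indicator_nonneg (fun x _ => (aEl_pos u x).le) x)
    (integrable_comp_norm_sq_add_mul h.contDiff.continuous h.eq_zero hR huc
      (contDiff_aEl hu).continuous)
    (ae_of_all _ (Set.indicator_le' (fun x hx => ?_) fun x _ => ?_))
  · rw [h.eq_one _ hx, one_mul]
  · exact mul_nonneg (h.nonneg _) (aEl_pos u x).le

theorem integral_mul_inv_aEl_add_columnIntegral_mul_meanCurv_le (h : IsCutoff χ r (R ^ 2))
    (hR : 0 ≤ R) {C : ℝ} (hC : ∀ x, ‖x‖ ≤ R → |u x * meanCurv u x| ≤ C) :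
    ∫ x, (χ (‖x‖ ^ 2 + u x ^ 2) * (aEl u x)⁻¹ + columnIntegral χ u x * meanCurv u x) ≤
      (1 + C) * (R ^ n * volume.real (ball (0 : E n) 1)) := by
  have hbound : ∀ x ∈ closedBall (0 : E n) R,
      ‖χ (‖x‖ ^ 2 + u x ^ 2) * (aEl u x)⁻¹ + columnIntegral χ u x * meanCurv u x‖ ≤ 1 + C := by
    intro x hx
    have hvert : |χ (‖x‖ ^ 2 + u x ^ 2) * (aEl u x)⁻¹| ≤ 1 := by
      rw [abs_mul, abs_inv, abs_of_pos (aEl_pos u x)]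
      exact mul_le_one₀ (h.abs_le_one _) (inv_nonneg.2 (aEl_pos u x).le)
        (inv_le_one_of_one_le₀ (one_le_aEl u x))
    have hcurv : |columnIntegral χ u x * meanCurv u x| ≤ C :=
      calc |columnIntegral χ u x * meanCurv u x|
          = |columnIntegral χ u x| * |meanCurv u x| := abs_mul _ _
        _ ≤ |u x| * |meanCurv u x| := mul_le_mul_of_nonneg_right
          (by simpa using abs_columnIntegral_le (u := u) (x := x) h.abs_le_one) (abs_nonneg _)
        _ ≤ C := abs_mul (u x) _ ▸ hC x (mem_closedBall_zero_iff.1 hx)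
    exact (abs_add_le _ _).trans (add_le_add hvert hcurv)
  have hzero : ∀ x ∉ closedBall (0 : E n) R,
      χ (‖x‖ ^ 2 + u x ^ 2) * (aEl u x)⁻¹ + columnIntegral χ u x * meanCurv u x = 0 := by
    intro x hx
    have hle : R ≤ ‖x‖ := (not_le.1 fun hle => hx (mem_closedBall_zero_iff.2 hle)).le
    rw [comp_norm_sq_add_sq_eq_zero h.eq_zero hR hle, columnIntegral_eq_zero h.eq_zero hR hle,
      zero_mul, zero_mul, add_zero]
  rw [← setIntegral_eq_integral_of_forall_compl_eq_zero hzero]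
  refine (Real.le_norm_self _).trans
    ((norm_setIntegral_le_of_norm_le_const measure_closedBall_lt_top hbound).trans_eq ?_)
  rw [Measure.addHaar_real_closedBall _ _ hR, finrank_euclideanSpace_fin]

theorem sVol_le_of_lt_of_abs_mul_meanCurv_le (hu : ContDiff ℝ 2 u) (hr : 0 ≤ r) (hrR : r < R)
    {C : ℝ} (hC : ∀ x, ‖x‖ ≤ R → |u x * meanCurv u x| ≤ C) :
    sVol u r ≤ 2 * halfSphereVol n * R ^ n * (1 + C / 2) := by
  have hR : 0 ≤ R := hr.trans hrR.le
  have hC0 : 0 ≤ C := (abs_nonneg _).trans (hC 0 (by simpa using hR))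
  obtain ⟨χ, h⟩ := exists_isCutoff (pow_lt_pow_left₀ hrR hr two_ne_zero)
  calc sVol u r ≤ ∫ x, χ (‖x‖ ^ 2 + u x ^ 2) * aEl u x := sVol_le_integral_mul_aEl h hr hR hu
    _ ≤ (1 + C) * (R ^ n * volume.real (ball (0 : E n) 1)) +
        (n + 1) * volume.real (ball (0 : E (n + 1)) 1) * (R ^ n / 2) := by
      rw [integral_mul_aEl_eq h.contDiff h.eq_zero hR hu, sub_eq_add_neg]
      exact add_le_add (integral_mul_inv_aEl_add_columnIntegral_mul_meanCurv_le h hR hC)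
        ((neg_le_abs _).trans (h.abs_integral_inner_mul_columnIntegral_deriv_le (sq_nonneg r) hR u
          (norm_Vfield_le_one u)))
    _ ≤ (1 + C) * (R ^ n * halfSphereVol n) + 2 * halfSphereVol n * (R ^ n / 2) :=
      add_le_add (by gcongr; exact volume_ball_le_halfSphereVol n)
        (mul_le_mul_of_nonneg_right (succ_mul_volume_ball_le_halfSphereVol n) (by positivity))
    _ = 2 * halfSphereVol n * R ^ n * (1 + C / 2) := by ring

end Calibration

theorem stmt_9_general {n : ℕ} {u : E n → ℝ} (hu : ContDiff ℝ 2 u) {R : ℝ} (hR : 0 < R) :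
    sVol u R ≤ 2 * halfSphereVol n * R ^ n * (1 + supBall (fun x => u x * meanCurv u x) R / 2) := by
  have hcurv : Continuous fun x => u x * meanCurv u x := hu.continuous.mul (continuous_meanCurv hu)
  have hlim : Tendsto (fun s => 2 * halfSphereVol n * s ^ n *
      (1 + supBall (fun x => u x * meanCurv u x) s / 2)) (nhdsWithin R (Set.Ioi R))
      (nhds (2 * halfSphereVol n * R ^ n * (1 + supBall (fun x => u x * meanCurv u x) R / 2))) :=
    (((tendsto_id.pow n).const_mul _).mul
      (((tendsto_supBall hcurv hR).div_const 2).const_add 1)).mono_left nhdsWithin_le_nhds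
  refine ge_of_tendsto hlim ?_
  filter_upwards [self_mem_nhdsWithin] with s hs
  exact sVol_le_of_lt_of_abs_mul_meanCurv_le hu hR.le hs fun x => abs_le_supBall hcurv

/-- volume estimate `Vol(Σ ∩ B_R) ≤ 2ωₙ Rⁿ (1 + R² + M_R²)` for an
entire graphical self-shrinker. -/
theorem stmt_9 (n : ℕ) (u : E n → ℝ) (hu : ContDiff ℝ (⊤ : ℕ∞) u) (hshr : ShrinkerEq u) :
    ∀ R > (0 : ℝ), sVol u R ≤
      2 * halfSphereVol n * R ^ n * (1 + R ^ 2 + (supBall u R) ^ 2) := by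
  intro R hR
  have hcurv := hshr.supBall_mul_meanCurv_le hu.continuous hR.le
  have hω := halfSphereVol_nonneg n
  refine (stmt_9_general (contDiff_infty.1 hu 2) hR).trans
    (mul_le_mul_of_nonneg_left ?_ (by positivity))
  linarith [sq_nonneg R, sq_nonneg (supBall u R)]
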